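/- arXiv:1704.03702 — 2 statements merged into one kernel-verified Lean document; each statement's English description precedes it below -/
import Mathlib

section
/- Let 𝕏 ⊆ ℙ^n_K be a 0-dimensional scheme and 0 ≤ d ≤ r_𝕏 − 1. Then 𝕏 has CBP(d) if and only if 𝔉_{R̃/R} ⊆ ⊕_{i ≥ d+1} R_i. In particular, 𝕏 is a Cayley–Bacharach scheme if and only if 𝔉_{R̃/R} = ⊕_{i ≥ r_𝕏} R_i. -/
noncomputable section

/-! An algebraic model for a 0-dimensional subscheme `𝕏 ⊆ ℙⁿ_K` whose support avoids
the hyperplane `Z(X₀)`.  The scheme is recorded through the local rings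
`𝒪_{𝕏,p_j}` at the points `p_1, …, p_s` of its support, together with the germ map
sending a homogeneous polynomial `F` of degree `i` to the tuple of germs
`(F_{p_1}, …, F_{p_s})`; this is the degree-`i` component of the injection
`ĩ : R → Q^h(R) ≅ ∏_j 𝒪_{𝕏,p_j}[T_j, T_j⁻¹]`, where every graded component of
`Q^h(R)` is identified with `Γ = ∏_j 𝒪_{𝕏,p_j}` by dropping the powers of the `T_j`.
Since `x₀` has germ `1` at every point, the homogeneous coordinate ring
`R = P/I_𝕏` is faithfully encoded by the chain of subspaces
`R_i ≅ V_i = germ(P_i) ⊆ Γ` (with `V_i ⊆ V_{i+1}`, and `V_i = Γ` for `i ≫ 0`). -/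

/-- The data of one (fat) point of a 0-dimensional scheme: a finite local `K`-algebra. -/
structure PointData (K : Type) [Field K] : Type 1 where
  carrier : Type
  [ring : CommRing carrier]
  [alg : Algebra K carrier]
  [loc : IsLocalRing carrier]
  [findim : FiniteDimensional K carrier]

attribute [instance] PointData.ring PointData.alg PointData.loc PointData.findim

/-- A model of a 0-dimensional subscheme of `ℙⁿ_K`, no point of whose support lies
on `Z(X₀)` (coordinates being chosen so that each point has `X₀`-coordinate 1, the
germ of `x₀` at every point is `1`). -/
structure ZeroDimScheme (K : Type) [Field K] (n : ℕ) : Type 1 where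
  /-- the number of points in the support -/
  s : ℕ
  spos : 0 < s
  /-- the local rings `𝒪_{𝕏,p_j}` -/
  pt : Fin s → PointData K
  /-- the germ map: for `F` homogeneous of degree `i` this is the degree-`i`
  component of `ĩ : R → Q^h(R)`, i.e. `F ↦ (F_{p_1}, …, F_{p_s})` -/
  germ : MvPolynomial (Fin (n + 1)) K →ₐ[K] ∀ j, (pt j).carrier
  /-- the germ of `X₀` at each point is `1` -/
  germ_X0 : germ (MvPolynomial.X 0) = 1
  /-- in all large degrees, the germ map is surjective onto `∏_j 𝒪_{𝕏,p_j}`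
  (this characterizes `I_𝕏` as the full homogeneous vanishing ideal of the scheme) -/
  eventually_surj : ∃ N : ℕ, ∀ i, N ≤ i →
    Submodule.map germ.toLinearMap
      (MvPolynomial.homogeneousSubmodule (Fin (n + 1)) K i) = ⊤

namespace ZeroDimScheme

variable {K : Type} [Field K] {n : ℕ}

/-- `Γ = ∏_j 𝒪_{𝕏,p_j}`, the common model for every graded component of `Q^h(R)`. -/
abbrev Gamma (S : ZeroDimScheme K n) : Type := ∀ j, (S.pt j).carrier

variable (S : ZeroDimScheme K n)

/-- `V i ⊆ Γ` is the image of the degree-`i` component `R_i` of the homogeneous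
coordinate ring `R` under (the degree-`i` component of) `ĩ`; we identify `R_i ≅ V i`. -/
def V (i : ℕ) : Submodule K S.Gamma :=
  Submodule.map S.germ.toLinearMap
    (MvPolynomial.homogeneousSubmodule (Fin (n + 1)) K i)

/-- `R_i` for `i : ℤ` (zero in negative degrees). -/
def Vz (i : ℤ) : Submodule K S.Gamma := if 0 ≤ i then S.V i.toNat else ⊥

/-- `deg 𝕏 = Σ_j dim_K 𝒪_{𝕏,p_j}`. -/
def degX : ℕ := Module.finrank K S.Gamma

/-- The Hilbert function `HF_𝕏(i) = dim_K R_i`. -/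
def HF (i : ℕ) : ℕ := Module.finrank K (S.V i)

/-- The Hilbert function on `ℤ`. -/
def HFz (i : ℤ) : ℕ := Module.finrank K (S.Vz i)

/-- The regularity index `r_𝕏`: the least `r` with `HF_𝕏(i) = deg 𝕏` for all `i ≥ r`. -/
def rX : ℕ := sInf {r : ℕ | ∀ i, r ≤ i → S.HF i = S.degX}

/-- `κ_j = dim_K κ(p_j)`, the residue field of `𝕏` at `p_j`. -/
def kappa (j : Fin S.s) : ℕ :=
  Module.finrank K
    ((S.pt j).carrier ⧸
      Submodule.restrictScalars K (IsLocalRing.maximalIdeal (S.pt j).carrier))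

/-- `sj` is a socle element of `𝒪_{𝕏,p_j}`, i.e. `sj ∈ Ann(𝔪_{𝕏,p_j})`.  By
Proposition 1.2, the maximal `p_j`-subschemes `𝕐 ⊆ 𝕏` correspond 1-1 to the ideals
of `Γ` generated by `(0,…,0,sj,0,…,0)` with `sj` a *nonzero* socle element. -/
def IsSocle (j : Fin S.s) (sj : (S.pt j).carrier) : Prop :=
  ∀ b ∈ IsLocalRing.maximalIdeal (S.pt j).carrier, sj * b = 0

/-- The ideal `U = ⟨(0,…,0,sj,0,…,0)⟩` of `Γ` corresponding to the maximal
`p_j`-subscheme `𝕐` determined by the socle element `sj`; one has `I_{𝕐/𝕏} = ĩ⁻¹(U)`. -/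
def sepIdeal (j : Fin S.s) (sj : (S.pt j).carrier) : Submodule K S.Gamma :=
  Submodule.restrictScalars K (Ideal.span {(Pi.single j sj : S.Gamma)})

/-- The degree-`i` component `(I_{𝕐/𝕏})_i = R_i ∩ ĩ⁻¹(U)` of the ideal of the maximal
`p_j`-subscheme `𝕐` (given by the socle element `sj`) in `R`. -/
def IY (j : Fin S.s) (sj : (S.pt j).carrier) (i : ℕ) : Submodule K S.Gamma :=
  S.V i ⊓ S.sepIdeal j sj

/-- `(I_{𝕐/𝕏})_i` for `i : ℤ`. -/
def IYz (j : Fin S.s) (sj : (S.pt j).carrier) (i : ℤ) : Submodule K S.Gamma :=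
  S.Vz i ⊓ S.sepIdeal j sj

/-- The Hilbert function `HF_𝕐(i) = HF_𝕏(i) - dim_K (I_{𝕐/𝕏})_i` of the maximal
`p_j`-subscheme `𝕐` given by the socle element `sj`. -/
def HFY (j : Fin S.s) (sj : (S.pt j).carrier) (i : ℕ) : ℕ :=
  S.HF i - Module.finrank K (S.IY j sj i)

/-- `HF_𝕐` on `ℤ`. -/
def HFYz (j : Fin S.s) (sj : (S.pt j).carrier) (i : ℤ) : ℕ :=
  S.HFz i - Module.finrank K (S.IYz j sj i)

/-- `α_{𝕐/𝕏} = min {i | (I_{𝕐/𝕏})_i ≠ 0}`. -/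
def alphaY (j : Fin S.s) (sj : (S.pt j).carrier) : ℕ :=
  sInf {i : ℕ | S.IY j sj i ≠ ⊥}

/-- `μ(a) = min {i | (0,…,0,a T_j^i,0,…,0) ∈ ĩ(R)}` for `a ∈ 𝒪_{𝕏,p_j}`. -/
def mu (j : Fin S.s) (a : (S.pt j).carrier) : ℕ :=
  sInf {i : ℕ | (Pi.single j a : S.Gamma) ∈ S.V i}

/-- `μ_{𝕐/𝕏}`, the maximal degree of a minimal separator of the maximal
`p_j`-subscheme `𝕐` given by the socle element `sj`; independently of all choices it
equals `max {μ(a·sj) | a ∈ 𝒪_{𝕏,p_j}, a·sj ≠ 0}`. -/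
def muY (j : Fin S.s) (sj : (S.pt j).carrier) : ℕ :=
  sSup {m : ℕ | ∃ a : (S.pt j).carrier, a * sj ≠ 0 ∧ m = S.mu j (a * sj)}

/-- `deg_𝕏(p_j) = min {μ_{𝕐/𝕏} | 𝕐 a maximal p_j-subscheme of 𝕏}`. -/
def degP (j : Fin S.s) : ℕ :=
  sInf {m : ℕ | ∃ sj : (S.pt j).carrier, S.IsSocle j sj ∧ sj ≠ 0 ∧ m = S.muY j sj}

/-- `𝕏` has the Cayley–Bacharach property of degree `d`: `deg_𝕏(p_j) ≥ d + 1` for all `j`. -/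
def CBP (d : ℕ) : Prop := ∀ j : Fin S.s, d + 1 ≤ S.degP j

/-- `𝕏` is a Cayley–Bacharach scheme: it has `CBP(r_𝕏 - 1)`. -/
def CayleyBacharach : Prop := S.CBP (S.rX - 1)

/-- The residue class map `𝒪_{𝕏,p_j} → κ(p_j)` as a `K`-linear map. -/
def resQ (j : Fin S.s) :
    (S.pt j).carrier →ₗ[K]
      ((S.pt j).carrier ⧸
        Submodule.restrictScalars K (IsLocalRing.maximalIdeal (S.pt j).carrier)) :=
  (Submodule.restrictScalars K (IsLocalRing.maximalIdeal (S.pt j).carrier)).mkQ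

/-- The residue classes of `e 0, …, e (κ_j - 1)` form a `K`-basis of `κ(p_j)`. -/
def IsResidueBasis (j : Fin S.s) {m : ℕ} (e : Fin m → (S.pt j).carrier) : Prop :=
  LinearIndependent K (fun k => S.resQ j (e k)) ∧
    Submodule.span K (Set.range fun k => S.resQ j (e k)) = ⊤

/-- A family `τ_j : 𝒪_{𝕏,p_j} → K` of trace maps: each `τ_j` is a generator of
`Hom_K(𝒪_{𝕏,p_j}, K)` as an `𝒪_{𝕏,p_j}`-module.  Such a family exists iff `𝕏` is
locally Gorenstein, and it induces a homogeneous trace map `σ` of degree zero of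
`Q^h(R)/L₀` (componentwise). -/
def IsTraceFamily (τ : ∀ j, (S.pt j).carrier →ₗ[K] K) : Prop :=
  ∀ j, Function.Bijective
    (fun a : (S.pt j).carrier => (τ j).comp (LinearMap.mulRight K a))

/-- The total trace `Γ → K`, `y ↦ Σ_j τ_j (y_j)`; on the degree-`i` component of
`Q^h(R)` the trace map `σ` is `q ↦ (Ttot τ q)·x₀^i`. -/
def Ttot (τ : ∀ j, (S.pt j).carrier →ₗ[K] K) : S.Gamma →ₗ[K] K :=
  ∑ j : Fin S.s, (τ j).comp (LinearMap.proj j)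

/-- The degree-`k` component `(𝔠^σ_𝕏)_k ⊆ Q^h(R)_k ≅ Γ` of the Dedekind complementary
module: `g ∈ (𝔠^σ_𝕏)_k` iff `σ(g · R) ⊆ K[x₀]`, i.e. `Ttot τ (g·x) = 0` whenever
`x ∈ R_i` with `k + i < 0`. -/
def Cmod (τ : ∀ j, (S.pt j).carrier →ₗ[K] K) (k : ℤ) : Submodule K S.Gamma :=
  ⨅ (i : ℕ) (_ : k + (i : ℤ) < 0) (x : S.Gamma) (_ : x ∈ S.V i),
    LinearMap.ker ((S.Ttot τ).comp (LinearMap.mulRight K x))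

/-- The degree-`i` component `(δ^σ_𝕏)_i ⊆ Q^h(R)_i ≅ Γ` of the Dedekind different
`δ^σ_𝕏 = {f ∈ Q^h(R) | f · 𝔠^σ_𝕏 ⊆ R}`. -/
def delta (τ : ∀ j, (S.pt j).carrier →ₗ[K] K) (i : ℤ) : Submodule K S.Gamma :=
  ⨅ (k : ℤ) (g : S.Gamma) (_ : g ∈ S.Cmod τ k),
    Submodule.comap (LinearMap.mulRight K g) (S.Vz (i + k))

/-- The Hilbert function of the Dedekind different. -/
def HFdelta (τ : ∀ j, (S.pt j).carrier →ₗ[K] K) (i : ℤ) : ℕ :=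
  Module.finrank K (S.delta τ i)

/-- `𝕏` has minimal Dedekind different: `δ^σ_𝕏 = ⊕_{i ≥ 2 r_𝕏} R_i`
(recall `R_i ≅ Γ` for `i ≥ r_𝕏`). -/
def MinimalDedekind (τ : ∀ j, (S.pt j).carrier →ₗ[K] K) : Prop :=
  ∀ i : ℤ, S.delta τ i = if 2 * (S.rX : ℤ) ≤ i then ⊤ else ⊥

/-- The degree-`i` component (`i ≥ 0`) of the conductor
`𝔉_{R̃/R} = {f ∈ R̃ | f·R̃ ⊆ R}` of `R` in `R̃ = ∏_j 𝒪_{𝕏,p_j}[T_j]`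
(whose degree-`i` component is all of `Γ` for every `i ≥ 0`). -/
def cond (i : ℕ) : Submodule K S.Gamma :=
  ⨅ y : S.Gamma, Submodule.comap (LinearMap.mulRight K y) (S.V i)

/-- The conductor on `ℤ` (zero in negative degrees, where `R̃` vanishes). -/
def condZ (i : ℤ) : Submodule K S.Gamma := if 0 ≤ i then S.cond i.toNat else ⊥

/-- The degree-`i` component of the trace `tr(𝔠^σ_𝕏) = δ^σ_𝕏 · 𝔠^σ_𝕏` of the
Dedekind complementary module. -/
def trC (τ : ∀ j, (S.pt j).carrier →ₗ[K] K) (i : ℤ) : Submodule K S.Gamma :=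
  ⨆ (a : ℤ) (b : ℤ) (_ : a + b = i), S.delta τ a * S.Cmod τ b

/-- `𝕏` is nearly Gorenstein: `𝔪 ⊆ tr(𝔠^σ_𝕏)`. -/
def NearlyGorenstein (τ : ∀ j, (S.pt j).carrier →ₗ[K] K) : Prop :=
  ∀ i : ℤ, 1 ≤ i → S.Vz i ≤ S.trC τ i

/-- `𝕏` is almost Gorenstein: there is an exact sequence of graded `R`-modules
`0 → R → 𝔠^σ_𝕏(-r_𝕏) → C → 0` with `𝔪·C = 0`.  A degree-zero graded injection
`R → 𝔠^σ_𝕏(-r_𝕏)` is multiplication by an element `g ∈ (𝔠^σ_𝕏)_{-r_𝕏}` with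
`Ann_R(g) = 0`, and `𝔪·C = 0` means `𝔪 · 𝔠^σ_𝕏(-r_𝕏) ⊆ g·R`. -/
def AlmostGorenstein (τ : ∀ j, (S.pt j).carrier →ₗ[K] K) : Prop :=
  ∃ g ∈ S.Cmod τ (-(S.rX : ℤ)),
    (∀ i : ℕ, ∀ x ∈ S.V i, x * g = 0 → x = 0) ∧
    (∀ a : ℕ, 1 ≤ a → ∀ x ∈ S.V a, ∀ k : ℤ, ∀ h ∈ S.Cmod τ k,
      x * h ∈ Submodule.map (LinearMap.mulRight K g) (S.Vz ((a : ℤ) + k + (S.rX : ℤ))))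

/-- `𝕏` is arithmetically Gorenstein, i.e. `R` is a Gorenstein ring; equivalently the
canonical module is free of rank one: `𝔠^σ_𝕏 = g·R` for some `g ∈ (𝔠^σ_𝕏)_{-r_𝕏}`. -/
def ArithGorenstein (τ : ∀ j, (S.pt j).carrier →ₗ[K] K) : Prop :=
  ∃ g ∈ S.Cmod τ (-(S.rX : ℤ)),
    ∀ k : ℤ, S.Cmod τ k = Submodule.map (LinearMap.mulRight K g) (S.Vz (k + (S.rX : ℤ)))

/-- `𝕏` is level: the socle of `R̄ = R/⟨x₀⟩` equals `R̄_{r_𝕏}`, i.e. no nonzero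
homogeneous element of `R̄` of degree `< r_𝕏` is annihilated by `𝔪̄` (recall
`R̄_i ≅ V i / V (i-1)` and `x₀`-multiplication preserves germs). -/
def Level : Prop :=
  ∀ i : ℕ, i < S.rX → ∀ x ∈ S.V i,
    (∀ a : ℕ, 1 ≤ a → ∀ y ∈ S.V a, x * y ∈ S.Vz ((i : ℤ) + (a : ℤ) - 1)) →
      x ∈ S.Vz ((i : ℤ) - 1)

/-- The subspace `{x ∈ Γ | x_k = 0 for k ≠ j}` of `Γ`: the degreewise model for the
ideal of the subscheme `𝕐_j ⊆ 𝕏` with `I_{𝕐_j} = ∩_{k ≠ j} I_k`. -/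
def Wj (j : Fin S.s) : Submodule K S.Gamma :=
  ⨅ (k : Fin S.s) (_ : k ≠ j),
    LinearMap.ker (LinearMap.proj k : S.Gamma →ₗ[K] (S.pt k).carrier)

/-- `(I_{𝕐_j/𝕏})_i` for the subscheme `𝕐_j` complementary to `p_j`. -/
def IW (j : Fin S.s) (i : ℕ) : Submodule K S.Gamma := S.V i ⊓ S.Wj j

/-- The Hilbert function of the subscheme `𝕐_j` complementary to `p_j`. -/
def HFW (j : Fin S.s) (i : ℕ) : ℕ := S.HF i - Module.finrank K (S.IW j i)

/-- `α_{𝕐_j/𝕏}` for the subscheme `𝕐_j` complementary to `p_j`. -/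
def alphaW (j : Fin S.s) : ℕ := sInf {i : ℕ | S.IW j i ≠ ⊥}

/-- The subspace `{x ∈ Γ | x_k = 0 for k ∉ {j₁, j₂}}` of `Γ`: the degreewise model for
the ideal in `R` of the subscheme of the reduced scheme `𝕏` complementary to `{p_{j₁}, p_{j₂}}`. -/
def Wpair (j1 j2 : Fin S.s) : Submodule K S.Gamma :=
  ⨅ (k : Fin S.s) (_ : k ≠ j1) (_ : k ≠ j2),
    LinearMap.ker (LinearMap.proj k : S.Gamma →ₗ[K] (S.pt k).carrier)

/-- The homogeneous vanishing ideal `I_𝕏 ⊆ P`. -/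
def IX : Ideal (MvPolynomial (Fin (n + 1)) K) :=
  Ideal.span {F | (∃ i : ℕ, F ∈ MvPolynomial.homogeneousSubmodule (Fin (n + 1)) K i) ∧
    S.germ F = 0}

/-- The `n×n`-minor (Jacobian determinant with respect to `X_1, …, X_n`) of an
`n`-tuple of polynomials. -/
def jacMinor (Fs : Fin n → MvPolynomial (Fin (n + 1)) K) : MvPolynomial (Fin (n + 1)) K :=
  Matrix.det (Matrix.of fun a b : Fin n => MvPolynomial.pderiv (Fin.succ b) (Fs a))

/-- The preimage in `P` of the Kähler different `ϑ_𝕏 ⊆ R`: the ideal generated by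
`I_𝕏` together with all `n×n` minors of the Jacobian matrix of elements of `I_𝕏`. -/
def KaehlerIdeal : Ideal (MvPolynomial (Fin (n + 1)) K) :=
  S.IX ⊔ Ideal.span {m | ∃ Fs : Fin n → MvPolynomial (Fin (n + 1)) K,
    (∀ a, Fs a ∈ S.IX) ∧ m = jacMinor Fs}

/-- The degree-`i` component of the Kähler different `ϑ_𝕏 ⊆ R`, viewed inside `Γ`. -/
def thetaPiece (i : ℕ) : Submodule K S.Gamma :=
  Submodule.map S.germ.toLinearMap
    (Submodule.restrictScalars K S.KaehlerIdeal ⊓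
      MvPolynomial.homogeneousSubmodule (Fin (n + 1)) K i)

end ZeroDimScheme

end

/-!
For a nonzero socle element `s` of `𝒪_{𝕏,p_j}`, the maximal degree of a minimal separator is at
most `i` exactly when every germ `(0, …, 0, a s, 0, …, 0)` comes from `R_i`, that is, when
`(0, …, 0, s, 0, …, 0)` lies in `𝔉_i`. Hence `deg_𝕏(p_j) ≤ i` if and only if `𝔉_i` contains such an
element with `s` a nonzero socle element. Since `𝔉_i` is an ideal of `Γ` and every nonzero ideal of
the Artinian local ring `𝒪_{𝕏,p_j}` meets its socle, some `deg_𝕏(p_j)` is at most `i` if and only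
if `𝔉_i ≠ 0`.
-/

theorem exists_smul_ne_zero_forall_mem_maximalIdeal_smul_eq_zero {A M : Type*} [CommRing A]
    [IsLocalRing A] [AddCommGroup M] [Module A M] [IsArtinian A M] {x : M} (hx : x ≠ 0) :
    ∃ a : A, a • x ≠ 0 ∧ ∀ b ∈ IsLocalRing.maximalIdeal A, b • a • x = 0 := by
  obtain ⟨N, hN, hNx⟩ := (eq_bot_or_exists_atom_le (Submodule.span A {x})).resolve_left
    (by simpa using hx)
  have : IsSimpleModule A N := isSimpleModule_iff_isAtom.mpr hN
  have hann : N.annihilator = IsLocalRing.maximalIdeal A :=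
    IsLocalRing.eq_maximalIdeal IsSimpleModule.annihilator_isMaximal
  obtain ⟨y, hyN, hy⟩ := N.exists_mem_ne_zero_of_ne_bot hN.1
  obtain ⟨a, rfl⟩ := Submodule.mem_span_singleton.mp (hNx hyN)
  exact ⟨a, hy, fun b hb ↦ Submodule.mem_annihilator.mp (hann ▸ hb) _ hyN⟩

namespace ZeroDimScheme

variable {K : Type} [Field K] {n : ℕ} (S : ZeroDimScheme K n)

theorem V_mono : Monotone S.V := by
  refine monotone_nat_of_le_succ fun i ↦ ?_
  rintro _ ⟨F, hF : F.IsHomogeneous i, rfl⟩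
  exact ⟨F * MvPolynomial.X 0, hF.mul (MvPolynomial.isHomogeneous_X K 0), by simp [S.germ_X0]⟩

theorem V_eq_top_of_rX_le {i : ℕ} (hi : S.rX ≤ i) : S.V i = ⊤ := by
  have hne : {r : ℕ | ∀ i, r ≤ i → S.HF i = S.degX}.Nonempty := by
    obtain ⟨N, hN⟩ := S.eventually_surj
    exact ⟨N, fun k hk ↦ (congrArg (fun W : Submodule K S.Gamma ↦ Module.finrank K W)
      (hN k hk)).trans (finrank_top K S.Gamma)⟩
  exact Submodule.eq_top_of_finrank_eq (Nat.sInf_mem hne i hi)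

theorem mem_cond {i : ℕ} {f : S.Gamma} : f ∈ S.cond i ↔ ∀ y : S.Gamma, f * y ∈ S.V i := by
  simp [cond]

theorem mul_mem_cond {i : ℕ} {f : S.Gamma} (y : S.Gamma) (hf : f ∈ S.cond i) :
    y * f ∈ S.cond i := by
  rw [mul_comm, mem_cond]
  exact fun z ↦ mul_assoc f y z ▸ S.mem_cond.mp hf (y * z)

theorem single_mem_cond {i : ℕ} {j : Fin S.s} {a : (S.pt j).carrier} :
    (Pi.single j a : S.Gamma) ∈ S.cond i ↔ ∀ b, (Pi.single j (b * a) : S.Gamma) ∈ S.V i := by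
  simp only [mem_cond, ← Pi.single_mul_left, mul_comm a]
  exact ⟨fun h b ↦ by simpa using h (Pi.single j b), fun h y ↦ h (y j)⟩

theorem cond_mono : Monotone S.cond :=
  fun _ _ hik ↦ iInf_mono fun _ ↦ Submodule.comap_mono (S.V_mono hik)

theorem cond_eq_top_of_rX_le {i : ℕ} (hi : S.rX ≤ i) : S.cond i = ⊤ := by
  simp [cond, S.V_eq_top_of_rX_le hi]

theorem mu_le_iff {j : Fin S.s} {a : (S.pt j).carrier} {i : ℕ} :
    S.mu j a ≤ i ↔ (Pi.single j a : S.Gamma) ∈ S.V i := by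
  have hne : {i : ℕ | (Pi.single j a : S.Gamma) ∈ S.V i}.Nonempty :=
    ⟨S.rX, by simp [S.V_eq_top_of_rX_le le_rfl]⟩
  exact ⟨fun h ↦ S.V_mono h (Nat.sInf_mem hne), fun h ↦ Nat.sInf_le h⟩

theorem mu_le_rX (j : Fin S.s) (a : (S.pt j).carrier) : S.mu j a ≤ S.rX := by
  simp [mu_le_iff, S.V_eq_top_of_rX_le le_rfl]

theorem muY_le_iff {j : Fin S.s} {s : (S.pt j).carrier} {i : ℕ} :
    S.muY j s ≤ i ↔ (Pi.single j s : S.Gamma) ∈ S.cond i := by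
  have hbdd : BddAbove {m : ℕ | ∃ a : (S.pt j).carrier, a * s ≠ 0 ∧ m = S.mu j (a * s)} := by
    refine ⟨S.rX, ?_⟩
    rintro _ ⟨a, -, rfl⟩
    exact S.mu_le_rX j _
  rw [muY, csSup_le_iff' hbdd, single_mem_cond]
  constructor
  · intro h a
    by_cases ha : a * s = 0
    · simp [ha]
    · exact S.mu_le_iff.mp (h _ ⟨a, ha, rfl⟩)
  · rintro h _ ⟨a, -, rfl⟩
    exact S.mu_le_iff.mpr (h a)

theorem exists_isSocle_mul {j : Fin S.s} {x : (S.pt j).carrier} (hx : x ≠ 0) :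
    ∃ a, S.IsSocle j (a * x) ∧ a * x ≠ 0 := by
  have : IsArtinianRing (S.pt j).carrier := IsArtinianRing.of_finite K _
  obtain ⟨a, hax, hsocle⟩ := exists_smul_ne_zero_forall_mem_maximalIdeal_smul_eq_zero
    (A := (S.pt j).carrier) hx
  exact ⟨a, fun b hb ↦ (mul_comm _ b).trans (hsocle b hb), hax⟩

theorem degP_le_iff {j : Fin S.s} {i : ℕ} :
    S.degP j ≤ i ↔ ∃ s, S.IsSocle j s ∧ s ≠ 0 ∧ (Pi.single j s : S.Gamma) ∈ S.cond i := by
  simp only [← muY_le_iff]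
  constructor
  · intro h
    obtain ⟨a, hsocle, ha⟩ := S.exists_isSocle_mul (j := j) one_ne_zero
    obtain ⟨s, hs, hs0, hmin⟩ := Nat.sInf_mem (s := {m : ℕ | ∃ s : (S.pt j).carrier,
      S.IsSocle j s ∧ s ≠ 0 ∧ m = S.muY j s}) ⟨_, _, hsocle, ha, rfl⟩
    exact ⟨s, hs, hs0, hmin ▸ h⟩
  · rintro ⟨s, hs, hs0, hle⟩
    have hdeg : S.degP j ≤ S.muY j s := Nat.sInf_le ⟨s, hs, hs0, rfl⟩
    exact hdeg.trans hle

theorem cond_ne_bot_iff_exists_degP_le {i : ℕ} : S.cond i ≠ ⊥ ↔ ∃ j, S.degP j ≤ i := by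
  simp only [degP_le_iff]
  constructor
  · intro h
    obtain ⟨f, hf, hf0⟩ := Submodule.exists_mem_ne_zero_of_ne_bot h
    obtain ⟨j, hj⟩ := Function.ne_iff.mp hf0
    obtain ⟨a, hsocle, ha⟩ := S.exists_isSocle_mul hj
    exact ⟨j, a * f j, hsocle, ha, Pi.single_mul_left (f := f) a ▸ S.mul_mem_cond _ hf⟩
  · rintro ⟨j, s, -, hs0, hs⟩
    exact Submodule.ne_bot_iff _ |>.mpr ⟨_, hs, by simpa using hs0⟩

theorem cbp_iff_cond_eq_bot {d : ℕ} : S.CBP d ↔ S.cond d = ⊥ := by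
  rw [← not_iff_not, ← ne_eq (S.cond d), cond_ne_bot_iff_exists_degP_le]
  simp [CBP]

theorem cbp_iff_forall_le_cond_eq_bot {d : ℕ} : S.CBP d ↔ ∀ i ≤ d, S.cond i = ⊥ :=
  S.cbp_iff_cond_eq_bot.trans
    ⟨fun h _ hi ↦ le_bot_iff.mp (h ▸ S.cond_mono hi), fun h ↦ h d le_rfl⟩

theorem cayleyBacharach_iff_forall_cond_eq (hr : 0 < S.rX) :
    S.CayleyBacharach ↔ ∀ i, S.cond i = if S.rX ≤ i then ⊤ else ⊥ := by
  refine S.cbp_iff_forall_le_cond_eq_bot.trans ⟨fun h i ↦ ?_, fun h i hi ↦ ?_⟩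
  · split_ifs with hi
    · exact S.cond_eq_top_of_rX_le hi
    · exact h i (by lia)
  · rw [h i, if_neg (by lia)]

end ZeroDimScheme

theorem dedekind_CB_stmt10_general {K : Type} [Field K] {n : ℕ} (S : ZeroDimScheme K n) :
    (∀ d, S.CBP d ↔ ∀ i ≤ d, S.cond i = ⊥) ∧
    (0 < S.rX → (S.CayleyBacharach ↔ ∀ i, S.cond i = if S.rX ≤ i then ⊤ else ⊥)) :=
  ⟨fun _ ↦ S.cbp_iff_forall_le_cond_eq_bot, S.cayleyBacharach_iff_forall_cond_eq⟩

/-- Theorem 5.4 / `thmSec4.4`.  Let `𝕏 ⊆ ℙⁿ_K` be a 0-dimensional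
scheme and `0 ≤ d ≤ r_𝕏 - 1`.  Then `𝕏` has `CBP(d)` iff
`𝔉_{R̃/R} ⊆ ⊕_{i ≥ d+1} R_i` (degreewise: the conductor vanishes in all degrees
`≤ d`).  In particular, `𝕏` is a Cayley–Bacharach scheme iff
`𝔉_{R̃/R} = ⊕_{i ≥ r_𝕏} R_i` (degreewise: `𝔉_i = 0` for `i < r_𝕏`, and `𝔉_i` is
all of `R_i ≅ Γ` for `i ≥ r_𝕏`). -/
theorem dedekind_CB_stmt10 (K : Type) [Field K] (n : ℕ) (S : ZeroDimScheme K n)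
    (d : ℕ) (hd : d + 1 ≤ S.rX) :
    (S.CBP d ↔ ∀ i : ℕ, i ≤ d → S.cond i = ⊥) ∧
    (S.CayleyBacharach ↔
      ∀ i : ℕ, S.cond i = if S.rX ≤ i then (⊤ : Submodule K S.Gamma) else ⊥) := by
  have ⟨cbp_iff, cayleyBacharach_iff⟩ := dedekind_CB_stmt10_general S
  exact ⟨cbp_iff d, cayleyBacharach_iff (by lia)⟩
end

section
/- Let 𝕏 ⊆ ℙ^n_K be a 0-dimensional locally Gorenstein scheme. If 𝕏 is an almost Gorenstein scheme, then 𝕏 is a nearly Gorenstein scheme and HF_{δ^σ_𝕏}(r_𝕏 + 1) = HF_𝕏(1). -/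
/-! The injection `R → 𝔠(-r_𝕏)` witnessing that `𝕏` is almost Gorenstein is multiplication by some
`g ∈ 𝔠_{-r_𝕏}`, which is a non-zerodivisor of the artinian ring `Γ` and hence a unit. The condition
`𝔪 · 𝔠 ⊆ g · R` then says that `𝔪 · g⁻¹ ⊆ δ`. So each `x ∈ 𝔪` is the product `(x g⁻¹) · g ∈ δ · 𝔠`,
and in every degree `i ≥ 1` multiplication by `g` is a bijection `δ_{i + r_𝕏} → R_i`, because
conversely `δ · g ⊆ δ · 𝔠 ⊆ R`. -/

namespace ZeroDimScheme

variable {K : Type} [Field K] {n : ℕ} {S : ZeroDimScheme K n}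

theorem Vz_natCast (i : ℕ) : S.Vz i = S.V i := by
  simp [Vz]

theorem HFz_natCast (i : ℕ) : S.HFz i = S.HF i := by
  rw [HFz, Vz_natCast, HF]

theorem isUnit_of_forall_mul_eq_zero {g : S.Gamma}
    (hg : ∀ i : ℕ, ∀ x ∈ S.V i, x * g = 0 → x = 0) : IsUnit g := by
  have : IsArtinianRing S.Gamma := IsArtinianRing.of_finite K S.Gamma
  obtain ⟨N, hN⟩ := S.eventually_surj
  have hVN : S.V N = ⊤ := hN N le_rfl
  refine IsArtinianRing.isUnit_of_mem_nonZeroDivisors (mem_nonZeroDivisors_iff_right.mpr ?_)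
  exact fun x hx => hg N x (hVN ▸ Submodule.mem_top) hx

variable {τ : ∀ j, (S.pt j).carrier →ₗ[K] K}

theorem mem_delta {i : ℤ} {f : S.Gamma} :
    f ∈ S.delta τ i ↔ ∀ k : ℤ, ∀ h ∈ S.Cmod τ k, f * h ∈ S.Vz (i + k) := by
  simp only [delta, Submodule.mem_iInf, Submodule.mem_comap, LinearMap.mulRight_apply]

theorem mul_mem_trC {a b i : ℤ} (hab : a + b = i) {f h : S.Gamma} (hf : f ∈ S.delta τ a)
    (hh : h ∈ S.Cmod τ b) : f * h ∈ S.trC τ i :=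
  Submodule.mem_iSup_of_mem a <| Submodule.mem_iSup_of_mem b <|
    Submodule.mem_iSup_of_mem hab <| Submodule.mul_mem_mul hf hh

section Unit

variable {d i : ℤ} {g : S.Gammaˣ}

theorem Vz_le_trC_of_unit (hg : (g : S.Gamma) ∈ S.Cmod τ (-d))
    (hδ : ∀ x ∈ S.Vz i, x * ↑g⁻¹ ∈ S.delta τ (d + i)) : S.Vz i ≤ S.trC τ i := by
  intro x hx
  rw [← g.inv_mul_cancel_right x]
  exact mul_mem_trC (by ring) (hδ x hx) hg

theorem map_mulRight_delta_of_unit (hg : (g : S.Gamma) ∈ S.Cmod τ (-d))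
    (hδ : ∀ x ∈ S.Vz i, x * ↑g⁻¹ ∈ S.delta τ (d + i)) :
    (S.delta τ (d + i)).map (LinearMap.mulRight K (g : S.Gamma)) = S.Vz i := by
  apply le_antisymm
  · rintro _ ⟨f, hf, rfl⟩
    have hfg : f * g ∈ S.Vz (d + i + -d) := mem_delta.mp hf (-d) g hg
    rwa [add_neg_cancel_comm] at hfg
  · exact fun x hx => ⟨x * ↑g⁻¹, hδ x hx, g.inv_mul_cancel_right x⟩

theorem HFdelta_eq_HFz_of_unit (hg : (g : S.Gamma) ∈ S.Cmod τ (-d))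
    (hδ : ∀ x ∈ S.Vz i, x * ↑g⁻¹ ∈ S.delta τ (d + i)) : S.HFdelta τ (d + i) = S.HFz i := by
  have hinj : Function.Injective (LinearMap.mulRight K (g : S.Gamma)) :=
    g.isUnit.mul_left_injective
  rw [HFdelta, HFz, ← map_mulRight_delta_of_unit hg hδ]
  exact (Submodule.equivMapOfInjective _ hinj _).finrank_eq

end Unit

namespace AlmostGorenstein

theorem exists_unit_mul_inv_mem_delta (hAG : S.AlmostGorenstein τ) :
    ∃ g : S.Gammaˣ, (g : S.Gamma) ∈ S.Cmod τ (-(S.rX : ℤ)) ∧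
      ∀ i : ℤ, 1 ≤ i → ∀ x ∈ S.Vz i, x * ↑g⁻¹ ∈ S.delta τ (S.rX + i) := by
  obtain ⟨g, hg, hfaithful, hmaximal⟩ := hAG
  lift g to S.Gammaˣ using isUnit_of_forall_mul_eq_zero hfaithful
  refine ⟨g, hg, fun i hi x hx => mem_delta.mpr fun k h hh => ?_⟩
  lift i to ℕ using by lia
  rw [Vz_natCast] at hx
  obtain ⟨y, hy, hyg : y * g = x * h⟩ := hmaximal i (by lia) x hx k h hh
  have hxh : x * ↑g⁻¹ * h = y := by
    rw [mul_right_comm, ← hyg, g.mul_inv_cancel_right]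
  rwa [hxh, add_comm (S.rX : ℤ), add_right_comm]

theorem nearlyGorenstein (hAG : S.AlmostGorenstein τ) : S.NearlyGorenstein τ := by
  obtain ⟨g, hg, hδ⟩ := hAG.exists_unit_mul_inv_mem_delta
  exact fun i hi => Vz_le_trC_of_unit hg (hδ i hi)

theorem HFdelta_rX_add (hAG : S.AlmostGorenstein τ) {i : ℤ} (hi : 1 ≤ i) :
    S.HFdelta τ (S.rX + i) = S.HFz i := by
  obtain ⟨g, hg, hδ⟩ := hAG.exists_unit_mul_inv_mem_delta
  exact HFdelta_eq_HFz_of_unit hg (hδ i hi)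

end AlmostGorenstein

end ZeroDimScheme

/-- Proposition 6.6 / `propSec5.06`.  Let `𝕏 ⊆ ℙⁿ_K` be a
0-dimensional locally Gorenstein scheme (with trace family `τ` inducing `σ`).  If
`𝕏` is an almost Gorenstein scheme, then `𝕏` is a nearly Gorenstein scheme and
`HF_{δ^σ_𝕏}(r_𝕏 + 1) = HF_𝕏(1)`. -/
theorem dedekind_CB_stmt15 (K : Type) [Field K] (n : ℕ) (S : ZeroDimScheme K n)
    (τ : ∀ j, (S.pt j).carrier →ₗ[K] K) (hτ : S.IsTraceFamily τ)
    (hAG : S.AlmostGorenstein τ) :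
    S.NearlyGorenstein τ ∧ S.HFdelta τ ((S.rX : ℤ) + 1) = S.HF 1 :=
  ⟨hAG.nearlyGorenstein, (hAG.HFdelta_rX_add le_rfl).trans (ZeroDimScheme.HFz_natCast 1)⟩
end
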